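/- arXiv:0711.1373 — 2 statements merged into one kernel-verified Lean document; each statement's English description precedes it below -/
import Mathlib

section
/- For every complex number u with |u| < 1, the infinite product ∏_{k=1}^∞ (1 − u^k)^{−1} converges, the series ∑_{n=1}^∞ p(n) u^n converges absolutely, and ∏_{k=1}^∞ (1 − u^k)^{−1} = 1 + ∑_{n=1}^∞ p(n) u^n. -/
open Complex Filter

/-- `partitionCount n` is the number of partitions of `n`. -/
noncomputable def partitionCount (n : ℕ) : ℕ := Nat.card (Nat.Partition n)

/-!
The partitions of `n` into parts at most `N` are counted by the `n`-th coefficient of the formal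
product `∏_{k ≤ N} ∑ⱼ X ^ (k j)`, whose factors converge absolutely at `u` to `(1 - u ^ k)⁻¹`.
These counts increase with `N` and equal `p(n)` as soon as `n ≤ N`. At a real point `0 ≤ r < 1` the
partial sums of `∑ p(n) r ^ n` are therefore bounded by the convergent product
`∏ (1 - r ^ k)⁻¹`; taking `r = ‖u‖` gives absolute convergence at `u`, and dominates the passage to
the limit `N → ∞` in the finite identities at `u`.
-/

section EulerPartition

open Finset PowerSeries Topology
open Nat.Partition (restricted)
open scoped PowerSeries.WithPiTopology

/-- `HasAbsEval P u x` says that the formal power series `P` converges absolutely at the point `u`,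
with value `x`. It transfers identities between formal power series to identities between their
values. -/
structure HasAbsEval {R : Type*} [NormedCommRing R] (P : R⟦X⟧) (u x : R) : Prop where
  summable_norm : Summable fun n ↦ ‖coeff n P * u ^ n‖
  hasSum : HasSum (fun n ↦ coeff n P * u ^ n) x

namespace HasAbsEval

variable {R : Type*} [NormedCommRing R] {P Q : R⟦X⟧} {u x y : R}

lemma one (u : R) : HasAbsEval 1 u 1 := by
  have coeff_eq_zero : ∀ n ≠ 0, coeff n (1 : R⟦X⟧) * u ^ n = 0 := fun n hn ↦ by
    simp [coeff_one, hn]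
  refine ⟨summable_of_ne_finset_zero (s := {0}) fun n hn ↦ ?_, ?_⟩
  · rw [coeff_eq_zero n (by simpa using hn), norm_zero]
  · simpa using hasSum_single 0 coeff_eq_zero

lemma mul (hP : HasAbsEval P u x) (hQ : HasAbsEval Q u y) :
    HasAbsEval (P * Q) u (x * y) := by
  have cauchy_product (n : ℕ) : ∑ ij ∈ antidiagonal n,
      (coeff ij.1 P * u ^ ij.1) * (coeff ij.2 Q * u ^ ij.2) = coeff n (P * Q) * u ^ n := by
    rw [coeff_mul, sum_mul]
    refine sum_congr rfl fun ij hij ↦ ?_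
    rw [← mem_antidiagonal.mp hij, pow_add]
    ring
  constructor
  · simpa only [cauchy_product] using
      summable_norm_sum_mul_antidiagonal_of_summable_norm hP.summable_norm hQ.summable_norm
  · have summable_product := summable_sum_mul_antidiagonal_of_summable_norm'
      hP.summable_norm hP.hasSum.summable hQ.summable_norm hQ.hasSum.summable
    have tsum_mul_tsum := tsum_mul_tsum_eq_tsum_sum_antidiagonal_of_summable_norm'
      hP.summable_norm hP.hasSum.summable hQ.summable_norm hQ.hasSum.summable
    rw [hP.hasSum.tsum_eq, hQ.hasSum.tsum_eq] at tsum_mul_tsum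
    simpa only [tsum_mul_tsum, cauchy_product] using summable_product.hasSum

lemma prod {ι : Type*} {P : ι → R⟦X⟧} {x : ι → R} (s : Finset ι)
    (h : ∀ i ∈ s, HasAbsEval (P i) u (x i)) : HasAbsEval (∏ i ∈ s, P i) u (∏ i ∈ s, x i) := by
  induction s using Finset.cons_induction with
  | empty => simpa only [prod_empty] using one u
  | cons i s hi ih =>
    simp only [forall_mem_cons] at h
    simpa only [prod_cons] using h.1.mul (ih h.2)

end HasAbsEval

lemma hasSum_X_pow_mul {R : Type*} [Semiring R] [TopologicalSpace R] {m : ℕ} (hm : m ≠ 0) :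
    HasSum (fun j : ℕ ↦ (X : R⟦X⟧) ^ (m * j)) (PowerSeries.mk fun n ↦ if m ∣ n then 1 else 0) := by
  rw [WithPiTopology.hasSum_iff_hasSum_coeff]
  intro n
  simp only [coeff_X_pow, coeff_mk]
  by_cases hmn : m ∣ n
  · obtain ⟨l, rfl⟩ := hmn
    simpa [hm, eq_comm] using hasSum_ite_eq l (1 : R)
  · have ne_mul (j : ℕ) : n ≠ m * j := fun h ↦ hmn ⟨j, h⟩
    simp [ne_mul, hmn, hasSum_zero]

variable {K : Type*} [NormedField K] {u : K}

lemma hasAbsEval_tsum_X_pow_mul (hu : ‖u‖ < 1) {m : ℕ} (hm : m ≠ 0) :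
    HasAbsEval (∑' j : ℕ, (X : K⟦X⟧) ^ (m * j)) u (1 - u ^ m)⁻¹ := by
  rw [(hasSum_X_pow_mul hm).tsum_eq]
  constructor
  · refine (summable_geometric_of_lt_one (norm_nonneg u) hu).of_nonneg_of_le
      (fun _ ↦ norm_nonneg _) fun n ↦ ?_
    rw [coeff_mk]
    split_ifs <;> simp
  · have norm_pow_lt_one : ‖u ^ m‖ < 1 := by
      rw [norm_pow]
      exact pow_lt_one₀ (norm_nonneg u) hu hm
    have coeff_eq_zero : ∀ n ∉ Set.range (m * ·),
        coeff n (PowerSeries.mk fun n ↦ if m ∣ n then (1 : K) else 0) * u ^ n = 0 := by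
      intro n hn
      have not_dvd : ¬ m ∣ n := fun ⟨j, hj⟩ ↦ hn ⟨j, hj.symm⟩
      simp [not_dvd]
    rw [← (mul_right_injective₀ hm).hasSum_iff coeff_eq_zero]
    simpa [Function.comp_def, pow_mul] using hasSum_geometric_of_norm_lt_one norm_pow_lt_one

lemma mk_card_restricted_le_eq_prod (R : Type*) [CommSemiring R] [TopologicalSpace R] [T2Space R]
    [IsTopologicalSemiring R] (N : ℕ) :
    PowerSeries.mk (fun n ↦ (#(restricted n (· ≤ N)) : R)) =
      ∏ k ∈ range N, ∑' j : ℕ, X ^ ((k + 1) * j) := by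
  rw [Nat.Partition.powerSeriesMk_card_restricted_eq_tprod, tprod_eq_prod (s := range N)]
  · exact prod_congr rfl fun k hk ↦ if_pos (Nat.succ_le_of_lt (mem_range.mp hk))
  · exact fun k hk ↦ if_neg (by simpa using hk)

lemma hasAbsEval_mk_card_restricted_le (hu : ‖u‖ < 1) (N : ℕ) :
    HasAbsEval (PowerSeries.mk fun n ↦ (#(restricted n (· ≤ N)) : K)) u
      (∏ k ∈ range N, (1 - u ^ (k + 1))⁻¹) := by
  rw [mk_card_restricted_le_eq_prod]
  exact .prod _ fun k _ ↦ hasAbsEval_tsum_X_pow_mul hu k.succ_ne_zero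

lemma hasSum_card_restricted_le_mul_pow (hu : ‖u‖ < 1) (N : ℕ) :
    HasSum (fun n ↦ (#(restricted n (· ≤ N)) : K) * u ^ n)
      (∏ k ∈ range N, (1 - u ^ (k + 1))⁻¹) := by
  simpa only [coeff_mk] using (hasAbsEval_mk_card_restricted_le hu N).hasSum

lemma partitionCount_zero : partitionCount 0 = 1 := by
  simp [partitionCount]

lemma card_restricted_le_partitionCount (n : ℕ) (s : ℕ → Prop) [DecidablePred s] :
    #(restricted n s) ≤ partitionCount n := by
  rw [partitionCount, Nat.card_eq_fintype_card]
  exact card_le_univ _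

lemma card_restricted_eq_partitionCount {n N : ℕ} (hnN : n ≤ N) :
    #(restricted n (· ≤ N)) = partitionCount n := by
  have restricted_eq_univ : restricted n (· ≤ N) = univ :=
    filter_true_of_mem fun p _ _ hi ↦
      (Multiset.le_sum_of_mem hi).trans (p.parts_sum.trans_le hnN)
  rw [restricted_eq_univ, card_univ, partitionCount, Nat.card_eq_fintype_card]

lemma multipliable_inv_one_sub_pow [CompleteSpace K] (hu : ‖u‖ < 1) :
    Multipliable fun k : ℕ ↦ (1 - u ^ (k + 1))⁻¹ := by
  have summable_norm : Summable fun k : ℕ ↦ ‖-u ^ (k + 1)‖ := by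
    simpa using (summable_nat_add_iff 1).mpr (summable_geometric_of_lt_one (norm_nonneg u) hu)
  have factor_ne_zero (k : ℕ) : 1 + -u ^ (k + 1) ≠ 0 := by
    rw [← sub_eq_add_neg, sub_ne_zero]
    intro h
    have norm_pow_lt_one := pow_lt_one₀ (norm_nonneg u) hu k.succ_ne_zero
    simp [← norm_pow, ← h] at norm_pow_lt_one
  simpa only [sub_eq_add_neg] using (multipliable_one_add_of_summable summable_norm).inv₀
    (tprod_one_add_ne_zero_of_summable factor_ne_zero summable_norm)

lemma summable_partitionCount_mul_pow {r : ℝ} (hr₀ : 0 ≤ r) (hr₁ : r < 1) :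
    Summable fun n ↦ (partitionCount n : ℝ) * r ^ n := by
  have norm_lt_one : ‖r‖ < 1 := by rwa [Real.norm_of_nonneg hr₀]
  obtain ⟨c, hc⟩ :=
    (multipliable_inv_one_sub_pow norm_lt_one).hasProd.tendsto_prod_nat.bddAbove_range
  refine summable_of_sum_range_le (c := c) (fun n ↦ by positivity) fun N ↦ ?_
  calc ∑ n ∈ range N, (partitionCount n : ℝ) * r ^ n
      = ∑ n ∈ range N, (#(restricted n (· ≤ N)) : ℝ) * r ^ n :=
        sum_congr rfl fun n hn ↦ by
          rw [card_restricted_eq_partitionCount (mem_range.mp hn).le]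
    _ ≤ ∏ k ∈ range N, (1 - r ^ (k + 1))⁻¹ :=
        sum_le_hasSum _ (fun n _ ↦ by positivity) (hasSum_card_restricted_le_mul_pow norm_lt_one N)
    _ ≤ c := hc ⟨N, rfl⟩

lemma norm_natCast_mul_pow_le {a b : ℕ} (hab : a ≤ b) (u : K) (n : ℕ) :
    ‖(a : K) * u ^ n‖ ≤ b * ‖u‖ ^ n := by
  rw [norm_mul, norm_pow]
  gcongr
  calc ‖(a : K)‖ ≤ a := by simpa using Nat.norm_cast_le (α := K) a
    _ ≤ b := mod_cast hab

lemma summable_norm_partitionCount_mul_pow (hu : ‖u‖ < 1) :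
    Summable fun n ↦ ‖(partitionCount n : K) * u ^ n‖ :=
  (summable_partitionCount_mul_pow (norm_nonneg u) hu).of_nonneg_of_le (fun _ ↦ norm_nonneg _)
    fun n ↦ norm_natCast_mul_pow_le le_rfl u n

lemma tprod_inv_one_sub_pow [CompleteSpace K] (hu : ‖u‖ < 1) :
    ∏' k : ℕ, (1 - u ^ (k + 1))⁻¹ = ∑' n, (partitionCount n : K) * u ^ n := by
  have tendsto_tprod := (multipliable_inv_one_sub_pow hu).hasProd.tendsto_prod_nat
  have tendsto_tsum : Tendsto (fun N ↦ ∑' n, (#(restricted n (· ≤ N)) : K) * u ^ n) atTop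
      (𝓝 (∑' n, (partitionCount n : K) * u ^ n)) := by
    refine tendsto_tsum_of_dominated_convergence
      (summable_partitionCount_mul_pow (norm_nonneg u) hu) (fun n ↦ ?_) (.of_forall fun N n ↦ ?_)
    · refine tendsto_atTop_of_eventually_const (i₀ := n) fun N hnN ↦ ?_
      rw [card_restricted_eq_partitionCount hnN]
    · exact norm_natCast_mul_pow_le (card_restricted_le_partitionCount n _) u n
  simp only [(hasSum_card_restricted_le_mul_pow hu _).tsum_eq] at tendsto_tsum
  exact tendsto_nhds_unique tendsto_tprod tendsto_tsum

theorem euler_partition_generating_function_general [CompleteSpace K] (u : K) (hu : ‖u‖ < 1) :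
    Multipliable (fun k : ℕ ↦ (1 - u ^ (k + 1))⁻¹) ∧
    Summable (fun n : ℕ ↦ ‖(partitionCount (n + 1) : K) * u ^ (n + 1)‖) ∧
    ∏' k : ℕ, (1 - u ^ (k + 1))⁻¹ =
      1 + ∑' n : ℕ, (partitionCount (n + 1) : K) * u ^ (n + 1) := by
  have summable_norm := summable_norm_partitionCount_mul_pow hu
  refine ⟨multipliable_inv_one_sub_pow hu,
    summable_norm.comp_injective (add_left_injective 1), ?_⟩
  rw [tprod_inv_one_sub_pow hu, summable_norm.of_norm.tsum_eq_zero_add]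
  simp only [partitionCount_zero, Nat.cast_one, pow_zero, mul_one]

end EulerPartition

/-- Euler's generating function for the partition numbers: for `|u| < 1` the infinite
product `∏_{k≥1} (1-u^k)⁻¹` converges, the series `∑_{n≥1} p(n)uⁿ` converges absolutely,
and the product equals `1` plus the sum. -/
theorem euler_partition_generating_function (u : ℂ) (hu : ‖u‖ < 1) :
    Multipliable (fun k : ℕ => (1 - u ^ (k + 1))⁻¹) ∧
    Summable (fun n : ℕ => ‖(partitionCount (n + 1) : ℂ) * u ^ (n + 1)‖) ∧
    (∏' k : ℕ, (1 - u ^ (k + 1))⁻¹) = 1 + ∑' n : ℕ, (partitionCount (n + 1) : ℂ) * u ^ (n + 1) :=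
  euler_partition_generating_function_general u hu
end

section
/- (a) For every complex x with |x| < 1 and every integer k ≥ 4, f_k(x) ≤ max(f_1(x), f_2(x), f_3(x)). (b) For every x ∈ R(1) and every integer k ≥ 2, f_1(x) ≥ f_k(x). (c) For every x ∈ R(2), f_2(x) ≥ f_1(x) and f_2(x) ≥ f_k(x) for every integer k ≥ 3. (d) For every x ∈ R(3), f_3(x) ≥ f_1(x), f_3(x) ≥ f_2(x), and f_3(x) ≥ f_k(x) for every integer k ≥ 4. -/
open Complex Filter

/-- The dilogarithm `Li₂(z) = ∑_{n=1}^∞ zⁿ/n²`. -/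
noncomputable def dilog (z : ℂ) : ℂ := ∑' n : ℕ, z ^ (n + 1) / ((n : ℂ) + 1) ^ 2

/-- `fk k x = (1/k)·Re √(Li₂(x^k))` with the principal branch square root. -/
noncomputable def fk (k : ℕ) (x : ℂ) : ℝ := (1 / (k : ℝ)) * ((dilog (x ^ k)) ^ (1 / 2 : ℂ)).re

/-- The region `R(1)`. -/
def R1 : Set ℂ := {x | ‖x‖ < 1 ∧ fk 2 x ≤ fk 1 x ∧ fk 3 x ≤ fk 1 x}

/-- The region `R(2)`. -/
def R2 : Set ℂ := {x | ‖x‖ < 1 ∧ fk 1 x ≤ fk 2 x ∧ fk 3 x ≤ fk 2 x}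

/-- The region `R(3)`. -/
def R3 : Set ℂ := {x | ‖x‖ < 1 ∧ fk 1 x ≤ fk 3 x ∧ fk 2 x ≤ fk 3 x}

/-!
The moments of the product of two independent uniform variables on `[0, 1]` are `1 / (n + 1) ^ 2`,
so `Li₂(y) = ∫ y / (1 - y t)` against its law. Since `2 (Re √w)² = ‖w‖ + Re w` and
`‖y‖ ‖w‖ ≥ Re (conj y * w)`, the value `w = Li₂(y)` satisfies
`2 (Re √w)² ≥ (‖y‖ + Re y) ∫ (1 - ‖y‖ t) / ‖1 - y t‖²`, and Cauchy–Schwarz bounds the integral below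
by an explicit function of any lower bound `c ≤ 1 / 2` for `cos (arg y)`. From above,
`(Re √w)² ≤ ‖w‖ ≤ π² ‖y‖ / 6`, with the better bound `‖w‖ ≤ ‖y‖` in the left half-plane.

For `k ≥ 4` these estimates give `f_k ≤ f_2` where `cos (arg x) ≤ -3 / 4` and `f_k ≤ f_1` elsewhere.
The one delicate case is `k = 4` with `cos (arg x)` near `-√2 / 2`, where the crude upper bound does
not suffice but `x ^ 4` lies in the left half-plane.
-/

open MeasureTheory ComplexConjugate

theorem integrable_of_continuous {X E : Type*} [TopologicalSpace X] [CompactSpace X]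
    [MeasurableSpace X] [OpensMeasurableSpace X] [NormedAddCommGroup E]
    {μ : Measure X} [IsFiniteMeasureOnCompacts μ] {f : X → E} (hf : Continuous f) :
    Integrable f μ :=
  hf.integrable_of_hasCompactSupport (HasCompactSupport.of_compactSpace f)

theorem sq_integral_div_integral_mul_le_integral_div {X : Type*} [MeasurableSpace X]
    {μ : Measure X} {w d : X → ℝ} (hw : ∀ x, 0 ≤ w x) (hd : ∀ x, 0 < d x)
    (hwi : Integrable w μ) (hmul : Integrable (fun x => w x * d x) μ)
    (hdiv : Integrable (fun x => w x / d x) μ) :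
    (∫ x, w x ∂μ) ^ 2 / ∫ x, w x * d x ∂μ ≤ ∫ x, w x / d x ∂μ := by
  set A := ∫ x, w x ∂μ
  set B := ∫ x, w x * d x ∂μ
  -- `1 / d` lies above its tangent line at `d = B / A`.
  have tangent (x : X) : 2 * (A / B) * w x - (A / B) ^ 2 * (w x * d x) ≤ w x / d x := by
    generalize A / B = s
    have hdx := hd x
    rw [le_div_iff₀ hdx]
    linarith [mul_nonneg (hw x) (sq_nonneg (1 - s * d x))]
  calc A ^ 2 / B = 2 * (A / B) * A - (A / B) ^ 2 * B := by
        rcases eq_or_ne B 0 with hB | hB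
        · simp [hB]
        · field_simp
          ring
    _ = ∫ x, (2 * (A / B) * w x - (A / B) ^ 2 * (w x * d x)) ∂μ := by
        rw [integral_sub (hwi.const_mul _) (hmul.const_mul _), integral_const_mul,
          integral_const_mul]
    _ ≤ ∫ x, w x / d x ∂μ :=
        integral_mono ((hwi.const_mul _).sub (hmul.const_mul _)) hdiv tangent

theorem one_sub_two_mul_add_sq_pos {c u : ℝ} (hc : c ≤ 1 / 2) (hu : 0 ≤ u) :
    0 < 1 - 2 * c * u + u ^ 2 := by
  nlinarith [sq_nonneg (u - 1 / 2), mul_nonneg (sub_nonneg.2 hc) hu]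

theorem antitoneOn_one_sub_div {c : ℝ} (hc : c ≤ 1 / 2) :
    AntitoneOn (fun u : ℝ => (1 - u) / (1 - 2 * c * u + u ^ 2)) (Set.Icc 0 1) := by
  rintro u ⟨hu0, _⟩ t ⟨ht0, ht1⟩ hut
  rw [div_le_div_iff₀ (one_sub_two_mul_add_sq_pos hc ht0) (one_sub_two_mul_add_sq_pos hc hu0),
    ← sub_nonneg]
  have h : 0 ≤ (t - u) * ((1 - 2 * c) + u * (1 - t) + t) :=
    mul_nonneg (by linarith) (by nlinarith [mul_nonneg hu0 (sub_nonneg.2 ht1)])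
  linarith

section MarkovFunction

/-- The Markov function `y ↦ ∑ yⁿ⁺¹ ∫ tⁿ dμ(t)` of a measure on `[0, 1]`, written as a single
integral so that it can be estimated pointwise. -/
noncomputable def markovFunction (μ : Measure unitInterval) (y : ℂ) : ℂ :=
  ∫ t, y / (1 - y * (t : ℝ)) ∂μ

variable {y : ℂ}

theorem norm_mul_unitInterval_le (y : ℂ) (t : unitInterval) : ‖y * (t : ℝ)‖ ≤ ‖y‖ := by
  rw [norm_mul, norm_real, Real.norm_of_nonneg t.2.1]
  exact mul_le_of_le_one_right (norm_nonneg y) t.2.2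

theorem one_sub_mul_unitInterval_ne_zero (hy : ‖y‖ < 1) (t : unitInterval) :
    1 - y * (t : ℝ) ≠ 0 := fun h => by
  have := norm_mul_unitInterval_le y t
  rw [← sub_eq_zero.1 h, norm_one] at this
  linarith

theorem normSq_one_sub_mul_ofReal (y : ℂ) (t : ℝ) :
    normSq (1 - y * t) = 1 - 2 * y.re * t + ‖y‖ ^ 2 * t ^ 2 := by
  rw [Complex.sq_norm, normSq_apply, normSq_apply]
  simp only [sub_re, one_re, re_mul_ofReal, sub_im, one_im, im_mul_ofReal]
  ring

theorem re_norm_add_conj_mul_div_one_sub (y : ℂ) (t : ℝ) :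
    ((‖y‖ + conj y) * (y / (1 - y * t))).re
      = ‖y‖ * (‖y‖ + y.re) * ((1 - ‖y‖ * t) / normSq (1 - y * t)) := by
  have hnorm : y.re ^ 2 + y.im ^ 2 = ‖y‖ ^ 2 := by rw [Complex.sq_norm, normSq_apply]; ring
  rw [← mul_div_assoc, div_re, ← add_div, ← mul_div_assoc]
  congr 1
  simp only [mul_re, mul_im, add_re, add_im, sub_re, sub_im, conj_re, conj_im, ofReal_re,
    ofReal_im, one_re, one_im]
  linear_combination (1 - ‖y‖ * t - t * y.re) * hnorm

variable {μ : Measure unitInterval} [IsFiniteMeasure μ]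

theorem hasSum_markovFunction (hy : ‖y‖ < 1) :
    HasSum (fun n : ℕ => y ^ (n + 1) * ((∫ t, (t : ℝ) ^ n ∂μ : ℝ) : ℂ)) (markovFunction μ y) := by
  have hterm (n : ℕ) : ∫ t, y * (y * (t : ℝ)) ^ n ∂μ
      = y ^ (n + 1) * ((∫ t, (t : ℝ) ^ n ∂μ : ℝ) : ℂ) := by
    rw [← integral_complex_ofReal, ← integral_const_mul]
    congr 1 with t
    push_cast
    ring
  simp only [← hterm]
  refine hasSum_integral_of_dominated_convergence (fun n _ => ‖y‖ * ‖y‖ ^ n)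
    (fun n => (by fun_prop : Continuous _).aestronglyMeasurable) (fun n => ?_) ?_
    (integrable_const _) ?_
  · refine .of_forall fun t => ?_
    rw [norm_mul, norm_pow]
    gcongr
    exact norm_mul_unitInterval_le y t
  · exact .of_forall fun _ => (summable_geometric_of_lt_one (norm_nonneg y) hy).mul_left _
  · refine .of_forall fun t => ?_
    rw [div_eq_mul_inv]
    exact (hasSum_geometric_of_norm_lt_one
      ((norm_mul_unitInterval_le y t).trans_lt hy)).mul_left y

theorem norm_markovFunction_le_of_re_nonpos (hre : y.re ≤ 0) :
    ‖markovFunction μ y‖ ≤ ‖y‖ * μ.real Set.univ := by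
  refine norm_integral_le_of_norm_le_const (.of_forall fun t => ?_)
  have hden : 1 ≤ ‖1 - y * (t : ℝ)‖ :=
    calc (1 : ℝ) ≤ (1 - y * (t : ℝ)).re := by
          rw [sub_re, one_re, re_mul_ofReal]
          linarith [mul_nonneg (neg_nonneg.2 hre) t.2.1]
      _ ≤ ‖1 - y * (t : ℝ)‖ := re_le_norm _
  rw [norm_div]
  exact div_le_self (norm_nonneg y) hden

theorem continuous_div_one_sub_mul (hy : ‖y‖ < 1) :
    Continuous fun t : unitInterval => y / (1 - y * (t : ℝ)) :=
  continuous_const.div (by fun_prop) (one_sub_mul_unitInterval_ne_zero hy)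

theorem continuous_one_sub_div_normSq (hy : ‖y‖ < 1) :
    Continuous fun t : unitInterval => (1 - ‖y‖ * t) / normSq (1 - y * (t : ℝ)) :=
  Continuous.div (by fun_prop) (continuous_normSq.comp (by fun_prop)) fun t =>
    (normSq_pos.2 (one_sub_mul_unitInterval_ne_zero hy t)).ne'

theorem mul_integral_le_norm_add_re_markovFunction (hy : ‖y‖ < 1) :
    (‖y‖ + y.re) * ∫ t, (1 - ‖y‖ * t) / normSq (1 - y * (t : ℝ)) ∂μ
      ≤ ‖markovFunction μ y‖ + (markovFunction μ y).re := by
  rcases eq_or_ne y 0 with rfl | hy0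
  · simp [markovFunction]
  set w := markovFunction μ y with hw
  -- `‖w‖` is at least the component of `w` along `y`.
  have hupper : ((‖y‖ + conj y) * w).re ≤ ‖y‖ * (‖w‖ + w.re) := by
    have := re_le_norm (conj y * w)
    rw [norm_mul, norm_conj] at this
    rw [add_mul, add_re, re_ofReal_mul]
    linarith
  have hlower : ((‖y‖ + conj y) * w).re
      = ‖y‖ * ((‖y‖ + y.re) * ∫ t, (1 - ‖y‖ * t) / normSq (1 - y * (t : ℝ)) ∂μ) := by
    have hint : Integrable (fun t : unitInterval => (‖y‖ + conj y) * (y / (1 - y * (t : ℝ)))) μ :=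
      (integrable_of_continuous (continuous_div_one_sub_mul hy)).const_mul _
    rw [hw, markovFunction, ← integral_const_mul, ← mul_assoc, ← integral_const_mul]
    simp only [← re_norm_add_conj_mul_div_one_sub]
    exact (integral_re hint).symm
  exact le_of_mul_le_mul_left (hlower ▸ hupper) (norm_pos_iff.2 hy0)

theorem one_sub_div_le_one_sub_mul_div_normSq (hy : ‖y‖ < 1) {c : ℝ} (hc : c ≤ 1 / 2)
    (hre : c * ‖y‖ ≤ y.re) (t : unitInterval) :
    (1 - t : ℝ) / (1 - 2 * c * t + t ^ 2) ≤ (1 - ‖y‖ * t) / normSq (1 - y * (t : ℝ)) := by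
  have hyt0 : 0 ≤ ‖y‖ * t := mul_nonneg (norm_nonneg y) t.2.1
  have hyt : ‖y‖ * t ≤ t := mul_le_of_le_one_left t.2.1 hy.le
  calc (1 - t : ℝ) / (1 - 2 * c * t + t ^ 2)
      ≤ (1 - ‖y‖ * t) / (1 - 2 * c * (‖y‖ * t) + (‖y‖ * t) ^ 2) :=
        antitoneOn_one_sub_div hc ⟨hyt0, hyt.trans t.2.2⟩ t.2 hyt
    _ ≤ (1 - ‖y‖ * t) / normSq (1 - y * (t : ℝ)) := by
        refine div_le_div_of_nonneg_left (sub_nonneg.2 (hyt.trans t.2.2))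
          (normSq_pos.2 (one_sub_mul_unitInterval_ne_zero hy t)) ?_
        rw [normSq_one_sub_mul_ofReal]
        linarith [mul_le_mul_of_nonneg_right hre t.2.1]

theorem mul_sq_integral_div_le_norm_add_re_markovFunction (hy : ‖y‖ < 1) {c : ℝ}
    (hc : c ≤ 1 / 2) (hre : c * ‖y‖ ≤ y.re) :
    (‖y‖ + y.re) * ((∫ t, (1 - t : ℝ) ∂μ) ^ 2 /
        ∫ t, (1 - t : ℝ) * (1 - 2 * c * t + t ^ 2) ∂μ)
      ≤ ‖markovFunction μ y‖ + (markovFunction μ y).re := by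
  have hpos (t : unitInterval) : 0 < 1 - 2 * c * t + (t : ℝ) ^ 2 :=
    one_sub_two_mul_add_sq_pos hc t.2.1
  have hdiv : Integrable (fun t : unitInterval => (1 - t : ℝ) / (1 - 2 * c * t + t ^ 2)) μ :=
    integrable_of_continuous
      (Continuous.div (by fun_prop) (by fun_prop) fun t => (hpos t).ne')
  have hintegral : (∫ t, (1 - t : ℝ) ∂μ) ^ 2 / ∫ t, (1 - t : ℝ) * (1 - 2 * c * t + t ^ 2) ∂μ
      ≤ ∫ t, (1 - ‖y‖ * t) / normSq (1 - y * (t : ℝ)) ∂μ :=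
    (sq_integral_div_integral_mul_le_integral_div (fun t => sub_nonneg.2 t.2.2) hpos
      (integrable_of_continuous (by fun_prop)) (integrable_of_continuous (by fun_prop))
      hdiv).trans
    (integral_mono hdiv (integrable_of_continuous (continuous_one_sub_div_normSq hy))
      (one_sub_div_le_one_sub_mul_div_normSq hy hc hre))
  have hnonneg : 0 ≤ ‖y‖ + y.re := by linarith [(abs_le.1 (abs_re_le_norm y)).1]
  exact (mul_le_mul_of_nonneg_left hintegral hnonneg).trans
    (mul_integral_le_norm_add_re_markovFunction hy)

end MarkovFunction

section Dilogarithm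

/-- The distribution of the product of two independent uniform variables on `[0, 1]`. Its moments
are `1 / (n + 1) ^ 2`, so its Markov function is the dilogarithm. -/
noncomputable def dilogMeasure : Measure unitInterval :=
  (volume : Measure unitInterval) ∗ₘ (volume : Measure unitInterval)

instance : IsProbabilityMeasure dilogMeasure := by
  unfold dilogMeasure
  infer_instance

theorem integral_unitInterval_pow (n : ℕ) :
    ∫ t : unitInterval, (t : ℝ) ^ n = 1 / ((n : ℝ) + 1) := by
  rw [integral_subtype measurableSet_Icc fun t : ℝ => t ^ n, integral_Icc_eq_integral_Ioc,
    ← intervalIntegral.integral_of_le zero_le_one, integral_pow]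
  simp

theorem integral_dilogMeasure_pow (n : ℕ) :
    ∫ t, (t : ℝ) ^ n ∂dilogMeasure = 1 / ((n : ℝ) + 1) ^ 2 := by
  rw [dilogMeasure, integral_mconv (integrable_of_continuous (by fun_prop))]
  simp only [Set.Icc.coe_mul, mul_pow, integral_const_mul, integral_mul_const,
    integral_unitInterval_pow]
  field_simp

theorem integral_dilogMeasure_one_sub : ∫ t, (1 - t : ℝ) ∂dilogMeasure = 3 / 4 := by
  have h := integral_dilogMeasure_pow 1
  simp only [pow_one] at h
  rw [integral_sub (integrable_of_continuous (by fun_prop))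
    (integrable_of_continuous (by fun_prop)), h]
  norm_num

theorem integral_dilogMeasure_one_sub_mul (c : ℝ) :
    ∫ t, (1 - t : ℝ) * (1 - 2 * c * t + t ^ 2) ∂dilogMeasure = (115 - 40 * c) / 144 := by
  have hexpand (t : ℝ) : (1 - t) * (1 - 2 * c * t + t ^ 2)
      = 1 - (1 + 2 * c) * t ^ 1 + (1 + 2 * c) * t ^ 2 - t ^ 3 := by ring
  simp only [hexpand]
  rw [integral_sub, integral_add, integral_sub]
  · simp only [integral_const_mul, integral_dilogMeasure_pow, integral_const, probReal_univ]
    norm_num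
    ring
  all_goals exact integrable_of_continuous (by fun_prop)

theorem dilog_eq_markovFunction {y : ℂ} (hy : ‖y‖ < 1) :
    dilog y = markovFunction dilogMeasure y := by
  rw [dilog, ← (hasSum_markovFunction hy).tsum_eq]
  congr 1 with n
  rw [integral_dilogMeasure_pow]
  push_cast
  ring

theorem norm_dilog_le {y : ℂ} (hy : ‖y‖ ≤ 1) : ‖dilog y‖ ≤ Real.pi ^ 2 / 6 * ‖y‖ := by
  have hzeta : HasSum (fun n : ℕ => 1 / ((n : ℝ) + 1) ^ 2) (Real.pi ^ 2 / 6) := by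
    simpa using (hasSum_nat_add_iff' 1).2 hasSum_zeta_two
  refine tsum_of_norm_bounded (hzeta.mul_right ‖y‖) fun n => ?_
  rw [norm_div, norm_pow, norm_pow, ← Nat.cast_add_one, norm_natCast, pow_succ, Nat.cast_add_one,
    one_div_mul_eq_div]
  gcongr
  exact mul_le_of_le_one_left (norm_nonneg y) (pow_le_one₀ (norm_nonneg y) hy)

theorem norm_dilog_le_of_re_nonpos {y : ℂ} (hy : ‖y‖ < 1) (hre : y.re ≤ 0) :
    ‖dilog y‖ ≤ ‖y‖ := by
  simpa [dilog_eq_markovFunction hy] using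
    norm_markovFunction_le_of_re_nonpos (μ := dilogMeasure) hre

theorem mul_norm_le_norm_add_re_dilog {y : ℂ} (hy : ‖y‖ < 1) {c : ℝ} (hc : c ≤ 1 / 2)
    (hre : c * ‖y‖ ≤ y.re) :
    81 * (1 + c) / (115 - 40 * c) * ‖y‖ ≤ ‖dilog y‖ + (dilog y).re := by
  have hden : 0 < 115 - 40 * c := by linarith
  calc 81 * (1 + c) / (115 - 40 * c) * ‖y‖ = ((1 + c) * ‖y‖) * (81 / (115 - 40 * c)) := by ring
    _ ≤ (‖y‖ + y.re) * (81 / (115 - 40 * c)) := by gcongr; linarith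
    _ = (‖y‖ + y.re) * ((∫ t, (1 - t : ℝ) ∂dilogMeasure) ^ 2 /
          ∫ t, (1 - t : ℝ) * (1 - 2 * c * t + t ^ 2) ∂dilogMeasure) := by
        rw [integral_dilogMeasure_one_sub, integral_dilogMeasure_one_sub_mul]
        field_simp
        ring
    _ ≤ ‖dilog y‖ + (dilog y).re := by
        rw [dilog_eq_markovFunction hy]
        exact mul_sq_integral_div_le_norm_add_re_markovFunction hy hc hre

end Dilogarithm

section Domination

variable {x : ℂ}

theorem fk_nonneg (k : ℕ) (x : ℂ) : 0 ≤ fk k x := by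
  rw [fk, one_div (2 : ℂ), cpow_inv_two_re]
  positivity

theorem fk_sq (k : ℕ) (x : ℂ) :
    fk k x ^ 2 = (‖dilog (x ^ k)‖ + (dilog (x ^ k)).re) / (2 * (k : ℝ) ^ 2) := by
  have hnonneg : 0 ≤ ‖dilog (x ^ k)‖ + (dilog (x ^ k)).re := by
    linarith [(abs_le.1 (abs_re_le_norm (dilog (x ^ k)))).1]
  rw [fk, one_div (2 : ℂ), cpow_inv_two_re, mul_pow, Real.sq_sqrt (by positivity)]
  ring

theorem fk_le_of_sq_le {j k : ℕ} {a : ℝ} (hk : fk k x ^ 2 ≤ a) (hj : a ≤ fk j x ^ 2) :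
    fk k x ≤ fk j x :=
  le_of_sq_le_sq (hk.trans hj) (fk_nonneg j x)

theorem fk_sq_le_norm_dilog (k : ℕ) (x : ℂ) :
    fk k x ^ 2 ≤ ‖dilog (x ^ k)‖ / (k : ℝ) ^ 2 := by
  rw [fk_sq, ← div_div]
  gcongr
  linarith [re_le_norm (dilog (x ^ k))]

theorem fk_sq_le_pi_sq_div_mul {j m k : ℕ} (hjk : j ≤ k) (hm : m ≠ 0) (hmk : m ≤ k)
    (hx : ‖x‖ ≤ 1) : fk k x ^ 2 ≤ Real.pi ^ 2 / (6 * (m : ℝ) ^ 2) * ‖x‖ ^ j := by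
  have hpow : ‖x ^ k‖ ≤ ‖x‖ ^ j := by
    rw [norm_pow]
    exact pow_le_pow_of_le_one (norm_nonneg x) hx hjk
  have : 0 < (m : ℝ) := by positivity
  calc fk k x ^ 2 ≤ ‖dilog (x ^ k)‖ / (k : ℝ) ^ 2 := fk_sq_le_norm_dilog k x
    _ ≤ Real.pi ^ 2 / 6 * ‖x ^ k‖ / (k : ℝ) ^ 2 := by
        gcongr
        exact norm_dilog_le (by rw [norm_pow]; exact pow_le_one₀ (norm_nonneg x) hx)
    _ ≤ Real.pi ^ 2 / 6 * ‖x‖ ^ j / (m : ℝ) ^ 2 := by gcongr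
    _ = Real.pi ^ 2 / (6 * (m : ℝ) ^ 2) * ‖x‖ ^ j := by ring

theorem mul_norm_pow_le_fk_sq (hx : ‖x‖ < 1) {j : ℕ} (hj : j ≠ 0) {c : ℝ} (hc : c ≤ 1 / 2)
    (hre : c * ‖x‖ ^ j ≤ (x ^ j).re) :
    81 * (1 + c) / (115 - 40 * c) / (2 * (j : ℝ) ^ 2) * ‖x‖ ^ j ≤ fk j x ^ 2 := by
  have hxj : ‖x ^ j‖ < 1 := by
    rw [norm_pow]
    exact pow_lt_one₀ (norm_nonneg x) hx hj
  rw [← norm_pow] at hre ⊢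
  rw [fk_sq, div_mul_eq_mul_div]
  gcongr
  exact mul_norm_le_norm_add_re_dilog hxj hc hre

theorem fk_le_fk_of_pi_sq_div_le (hx : ‖x‖ < 1) {j m k : ℕ} (hj : j ≠ 0) (hjk : j ≤ k)
    (hm : m ≠ 0) (hmk : m ≤ k) {c : ℝ} (hc : c ≤ 1 / 2) (hre : c * ‖x‖ ^ j ≤ (x ^ j).re)
    (hconst : Real.pi ^ 2 / (6 * (m : ℝ) ^ 2)
      ≤ 81 * (1 + c) / (115 - 40 * c) / (2 * (j : ℝ) ^ 2)) :
    fk k x ≤ fk j x :=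
  fk_le_of_sq_le ((fk_sq_le_pi_sq_div_mul hjk hm hmk hx.le).trans (by gcongr))
    (mul_norm_pow_le_fk_sq hx hj hc hre)

theorem re_sq_eq_two_mul_sub (y : ℂ) : (y ^ 2).re = 2 * y.re ^ 2 - ‖y‖ ^ 2 := by
  rw [Complex.sq_norm, normSq_apply, pow_two, mul_re]
  ring

theorem pi_sq_lt : Real.pi ^ 2 < 9.93 := by
  nlinarith [Real.pi_lt_d2, Real.pi_pos]

theorem fk_le_fk_two (hx : ‖x‖ < 1) (hre : x.re ≤ -3 / 4 * ‖x‖) {k : ℕ} (hk : 4 ≤ k) :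
    fk k x ≤ fk 2 x := by
  have hre_sq : 1 / 8 * ‖x‖ ^ 2 ≤ (x ^ 2).re := by
    rw [re_sq_eq_two_mul_sub]
    nlinarith [norm_nonneg x]
  refine fk_le_fk_of_pi_sq_div_le hx two_ne_zero (by lia) four_ne_zero hk (by norm_num) hre_sq ?_
  norm_num
  linarith [pi_sq_lt]

theorem fk_le_fk_one_of_five_le (hx : ‖x‖ < 1) (hre : -3 / 4 * ‖x‖ ≤ x.re) {k : ℕ}
    (hk : 5 ≤ k) : fk k x ≤ fk 1 x := by
  refine fk_le_fk_of_pi_sq_div_le hx one_ne_zero (by lia) (by norm_num) hk (c := -3 / 4)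
    (by norm_num) (by simpa only [pow_one] using hre) ?_
  norm_num
  linarith [pi_sq_lt]

theorem re_pow_four_nonpos (hlow : -3 / 4 * ‖x‖ ≤ x.re) (hupp : x.re ≤ -3 / 5 * ‖x‖) :
    (x ^ 4).re ≤ 0 := by
  have hsq_low : 9 / 25 * ‖x‖ ^ 2 ≤ x.re ^ 2 := by nlinarith [norm_nonneg x]
  have hsq_upp : x.re ^ 2 ≤ 9 / 16 * ‖x‖ ^ 2 := by nlinarith [norm_nonneg x]
  rw [show x ^ 4 = (x ^ 2) ^ 2 by ring, re_sq_eq_two_mul_sub, re_sq_eq_two_mul_sub, norm_pow]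
  nlinarith [sq_nonneg ‖x‖]

theorem fk_four_sq_le_of_re_nonpos (hx : ‖x‖ < 1) (hre : (x ^ 4).re ≤ 0) :
    fk 4 x ^ 2 ≤ 1 / 16 * ‖x‖ := by
  have hpow : ‖x ^ 4‖ ≤ ‖x‖ := by
    rw [norm_pow]
    exact pow_le_of_le_one (norm_nonneg x) hx.le four_ne_zero
  calc fk 4 x ^ 2 ≤ ‖dilog (x ^ 4)‖ / ((4 : ℕ) : ℝ) ^ 2 := fk_sq_le_norm_dilog 4 x
    _ ≤ ‖x‖ / ((4 : ℕ) : ℝ) ^ 2 := by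
        gcongr
        exact (norm_dilog_le_of_re_nonpos (hpow.trans_lt hx) hre).trans hpow
    _ = 1 / 16 * ‖x‖ := by norm_num; ring

theorem fk_four_le_fk_one (hx : ‖x‖ < 1) (hre : -3 / 4 * ‖x‖ ≤ x.re) : fk 4 x ≤ fk 1 x := by
  rcases le_total x.re (-3 / 5 * ‖x‖) with hleft | hright
  · have hlower := mul_norm_pow_le_fk_sq hx one_ne_zero (c := -3 / 4) (by norm_num)
      (by simpa only [pow_one] using hre)
    refine fk_le_of_sq_le
      (fk_four_sq_le_of_re_nonpos hx (re_pow_four_nonpos hre hleft)) (le_trans ?_ hlower)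
    norm_num
    linarith [norm_nonneg x]
  · refine fk_le_fk_of_pi_sq_div_le hx one_ne_zero (by norm_num) four_ne_zero le_rfl
      (c := -3 / 5) (by norm_num) (by simpa only [pow_one] using hright) ?_
    norm_num
    linarith [pi_sq_lt]

theorem fk_le_max_fk_one_fk_two (hx : ‖x‖ < 1) {k : ℕ} (hk : 4 ≤ k) :
    fk k x ≤ max (fk 1 x) (fk 2 x) := by
  rcases le_total x.re (-3 / 4 * ‖x‖) with hleft | hright
  · exact le_max_of_le_right (fk_le_fk_two hx hleft hk)
  · rcases hk.eq_or_lt with rfl | hk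
    · exact le_max_of_le_left (fk_four_le_fk_one hx hright)
    · exact le_max_of_le_left (fk_le_fk_one_of_five_le hx hright hk)

theorem fk_le_of_fk_one_two_three_le (hx : ‖x‖ < 1) {a : ℝ} (h1 : fk 1 x ≤ a)
    (h2 : fk 2 x ≤ a) (h3 : fk 3 x ≤ a) {k : ℕ} (hk : 1 ≤ k) : fk k x ≤ a := by
  rcases lt_or_ge k 4 with hlt | hge
  · interval_cases k <;> assumption
  · exact (fk_le_max_fk_one_fk_two hx hge).trans (max_le h1 h2)

end Domination

/-- Domination theorem: (a) on the unit disk `fk k ≤ max(f₁,f₂,f₃)` for `k ≥ 4`;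
(b) `f₁` dominates all `fk`, `k ≥ 2`, on `R(1)`; (c) `f₂` dominates `f₁` and all `fk`, `k ≥ 3`,
on `R(2)`; (d) `f₃` dominates `f₁`, `f₂` and all `fk`, `k ≥ 4`, on `R(3)`. -/
theorem fk_domination :
    (∀ x : ℂ, ‖x‖ < 1 → ∀ k : ℕ, 4 ≤ k → fk k x ≤ max (fk 1 x) (max (fk 2 x) (fk 3 x))) ∧
    (∀ x ∈ R1, ∀ k : ℕ, 2 ≤ k → fk 1 x ≥ fk k x) ∧
    (∀ x ∈ R2, fk 2 x ≥ fk 1 x ∧ ∀ k : ℕ, 3 ≤ k → fk 2 x ≥ fk k x) ∧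
    (∀ x ∈ R3, fk 3 x ≥ fk 1 x ∧ fk 3 x ≥ fk 2 x ∧ ∀ k : ℕ, 4 ≤ k → fk 3 x ≥ fk k x) := by
  refine ⟨fun x hx k hk => ?_, ?_, ?_, ?_⟩
  · exact (fk_le_max_fk_one_fk_two hx hk).trans (max_le_max_left _ (le_max_left _ _))
  · rintro x ⟨hx, h2, h3⟩ k hk
    exact fk_le_of_fk_one_two_three_le hx le_rfl h2 h3 (by lia)
  · rintro x ⟨hx, h1, h3⟩
    exact ⟨h1, fun k hk => fk_le_of_fk_one_two_three_le hx h1 le_rfl h3 (by lia)⟩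
  · rintro x ⟨hx, h1, h2⟩
    exact ⟨h1, h2, fun k hk => fk_le_of_fk_one_two_three_le hx h1 h2 le_rfl (by lia)⟩
end
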